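/- The standardized random variable σ_N^{−1}(X_N − μ_N) converges in distribution, as N → ∞, to a standard Gaussian random variable; moreover the convergence holds with speed O(N^{−1/2}) in the Kolmogorov (sup of CDF difference) metric: sup_{x∈ℝ} |P(σ_N^{−1}(X_N − μ_N) ≤ x) − Φ(x)| = O(N^{−1/2}), where Φ is the standard normal CDF. -/

import Mathlib

/-!
A lemniscate tree on `N` vertices is a rooted nonplane binary tree whose vertices are
bijectively labeled `1,…,N` (here: `Fin N`, with vertex `0` playing the role of label 1)
such that labels strictly increase along every path directed away from the root.
Since children are unordered, such a tree is faithfully encoded by its parent function: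
vertex `0` is the root (it has no parent), every other vertex has a parent with strictly
smaller label, and every vertex has at most two children.
-/
def LemniscateTree (N : ℕ) : Type :=
  {f : Fin N → Option (Fin N) //
    (∀ i : Fin N, f i = none ↔ (i : ℕ) = 0) ∧
    (∀ i j : Fin N, f i = some j → (j : ℕ) < (i : ℕ)) ∧
    (∀ j : Fin N, (Finset.univ.filter fun i => f i = some j).card ≤ 2)}

instance (N : ℕ) : Fintype (LemniscateTree N) := by
  unfold LemniscateTree; infer_instance

/-- The number of vertices of outdegree two (i.e. with exactly two children). -/
def outdegTwoCount {N : ℕ} (T : LemniscateTree N) : ℕ :=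
  (Finset.univ.filter fun j : Fin N =>
    (Finset.univ.filter fun i => T.1 i = some j).card = 2).card

/-- `μ_N`: the mean number of outdegree-two vertices of a uniformly random
lemniscate tree on `N` vertices. -/
noncomputable def lemMean (N : ℕ) : ℝ :=
  (∑ T : LemniscateTree N, (outdegTwoCount T : ℝ)) / (Fintype.card (LemniscateTree N))

/-- `σ_N²`: the variance of the number of outdegree-two vertices of a uniformly
random lemniscate tree on `N` vertices. -/
noncomputable def lemVar (N : ℕ) : ℝ :=
  (∑ T : LemniscateTree N, ((outdegTwoCount T : ℝ) - lemMean N) ^ 2) /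
    (Fintype.card (LemniscateTree N))

open scoped Classical in
/-- The cumulative distribution function of the standardized random variable
`σ_N⁻¹ (X_N − μ_N)`, where `X_N` is the number of outdegree-two vertices of a
uniformly random lemniscate tree on `N` vertices. -/
noncomputable def stdCDF (N : ℕ) (x : ℝ) : ℝ :=
  ((Finset.univ.filter fun T : LemniscateTree N =>
      ((outdegTwoCount T : ℝ) - lemMean N) / Real.sqrt (lemVar N) ≤ x).card : ℝ) /
    (Fintype.card (LemniscateTree N))

/-- The standard Gaussian cumulative distribution function `Φ`. -/
noncomputable def stdGaussianCDF (x : ℝ) : ℝ :=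
  ∫ t in Set.Iic x, Real.exp (-(t ^ 2) / 2) / Real.sqrt (2 * Real.pi)

/-!
Removing the vertex with the largest label shows that every tree on `N + 2` vertices arises from one
on `N + 1` vertices by adding a child to a vertex of outdegree at most one. Hence, if `F N c s` is
the generating function of the trees on `N + 1` vertices in which the vertices of outdegree one have
weight `c` and those of outdegree two weight `s`, then `s * F N c s` has derivative
`c' * F (N + 1) c s` as soon as `s' = c * c'`. This is used twice.

* For `c = X` and `s = (X ^ 2 - 1) / 2`, Rolle's theorem shows that `F N c s` is real-rooted, and so
  is the generating polynomial `F N 1 X` of `X_N`. Since its coefficients are nonnegative, `X_N` is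
  distributed as a sum of independent Bernoulli variables, and Stein's method bounds its Kolmogorov
  distance to the Gaussian distribution by a constant multiple of `1 / σ_N`.
* For `c = sec y + tan y` and `s = c'`, the numbers of trees are the derivatives of `c` at `0`.
  Cauchy's estimates, applied after removing the pole of `c` at `π / 2`, show that the numbers of
  trees on `N + 1` and on `N` vertices have ratio `2 / π * (N + 1) + o(1)`. The mean and the
  variance are expressions in these ratios, and `σ_N ^ 2` grows like
  `(2 / π * (2 / π + 1) - 1) * N`.
-/

open Polynomial Finset

section PGFExpectation

variable {R : Type*} [CommRing R]

/-- The expectation of `h : ℕ → R` under the (possibly unnormalized or signed) distribution with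
probability generating function `P`, that is, `∑ k, P.coeff k * h k`. It is linear in both `P` and
`h`. -/
noncomputable def pgfExpectation : R[X] →ₗ[R] (ℕ → R) →ₗ[R] R :=
  lsum fun k => LinearMap.toSpanSingleton R _ (LinearMap.proj k)

@[simp]
theorem pgfExpectation_monomial (k : ℕ) (a : R) (h : ℕ → R) :
    pgfExpectation (monomial k a) h = a * h k := by
  simp [pgfExpectation]

@[simp]
theorem pgfExpectation_one (h : ℕ → R) : pgfExpectation 1 h = h 0 := by
  simpa only [monomial_zero_one, one_mul] using pgfExpectation_monomial 0 1 h

theorem pgfExpectation_X_pow (k : ℕ) (h : ℕ → R) : pgfExpectation (X ^ k) h = h k := by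
  simp [X_pow_eq_monomial]

theorem pgfExpectation_C_mul (a : R) (P : R[X]) (h : ℕ → R) :
    pgfExpectation (C a * P) h = a * pgfExpectation P h := by
  rw [C_mul', map_smul, LinearMap.smul_apply, smul_eq_mul]

theorem pgfExpectation_X_mul (P : R[X]) (h : ℕ → R) :
    pgfExpectation (X * P) h = pgfExpectation P fun k => h (k + 1) := by
  induction P using Polynomial.induction_on' with
  | add P Q hP hQ => simp [mul_add, hP, hQ]
  | monomial k a => simp [X_mul_monomial]

theorem pgfExpectation_X_mul_derivative (P : R[X]) (h : ℕ → R) :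
    pgfExpectation (X * derivative P) h = pgfExpectation P fun k => k * h k := by
  induction P using Polynomial.induction_on' with
  | add P Q hP hQ => simp [mul_add, hP, hQ]
  | monomial k a =>
    rw [pgfExpectation_X_mul, derivative_monomial, pgfExpectation_monomial, pgfExpectation_monomial]
    cases k <;> simp [mul_assoc]

theorem pgfExpectation_const (P : R[X]) (a : R) :
    pgfExpectation P (fun _ => a) = a * P.eval 1 := by
  induction P using Polynomial.induction_on' with
  | add P Q hP hQ => simp [mul_add, hP, hQ]
  | monomial k b => simp [mul_comm]

end PGFExpectation

section PoissonBinomial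

variable {R ι : Type*} [CommRing R] (p : ι → R)

/-- The probability generating function of a sum of independent Bernoulli variables, one for each
`i ∈ s`, with success probabilities `p i` (a Poisson binomial distribution). -/
noncomputable def poissonBinomial (s : Finset ι) : R[X] := ∏ i ∈ s, (C (1 - p i) + C (p i) * X)

@[simp]
theorem eval_one_poissonBinomial (s : Finset ι) : (poissonBinomial p s).eval 1 = 1 := by
  simp [poissonBinomial, eval_prod]

theorem pgfExpectation_poissonBinomial_const (s : Finset ι) (a : R) :
    pgfExpectation (poissonBinomial p s) (fun _ => a) = a := by
  simp [pgfExpectation_const]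

variable {s : Finset ι}

theorem pgfExpectation_poissonBinomial_insert [DecidableEq ι] {i : ι} (hi : i ∉ s) (h : ℕ → R) :
    pgfExpectation (poissonBinomial p (insert i s)) h =
      (1 - p i) * pgfExpectation (poissonBinomial p s) h +
        p i * pgfExpectation (poissonBinomial p s) fun k => h (k + 1) := by
  rw [poissonBinomial, prod_insert hi, ← poissonBinomial, add_mul, mul_assoc, map_add,
    LinearMap.add_apply, pgfExpectation_C_mul, pgfExpectation_C_mul, pgfExpectation_X_mul]

theorem pgfExpectation_poissonBinomial_erase [DecidableEq ι] {i : ι} (hi : i ∈ s) (h : ℕ → R) :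
    pgfExpectation (poissonBinomial p s) h =
      (1 - p i) * pgfExpectation (poissonBinomial p (s.erase i)) h +
        p i * pgfExpectation (poissonBinomial p (s.erase i)) fun k => h (k + 1) := by
  rw [← pgfExpectation_poissonBinomial_insert p (notMem_erase i s), insert_erase hi]

theorem pgfExpectation_poissonBinomial_nat_mul [DecidableEq ι] (h : ℕ → R) :
    pgfExpectation (poissonBinomial p s) (fun k => k * h k) =
      ∑ i ∈ s, p i * pgfExpectation (poissonBinomial p (s.erase i)) fun k => h (k + 1) := by
  have hderiv : X * derivative (poissonBinomial p s) =
      ∑ i ∈ s, C (p i) * (X * poissonBinomial p (s.erase i)) := by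
    rw [poissonBinomial, derivative_prod_finset, mul_sum]
    refine sum_congr rfl fun i _ => ?_
    rw [← poissonBinomial]
    simp only [derivative_add, derivative_C_mul, derivative_C, derivative_X]
    ring
  rw [← pgfExpectation_X_mul_derivative, hderiv, map_sum, LinearMap.sum_apply]
  exact sum_congr rfl fun i _ => by rw [pgfExpectation_C_mul, pgfExpectation_X_mul]

theorem pgfExpectation_poissonBinomial_sub_mean_mul [DecidableEq ι] (f : ℕ → R) :
    pgfExpectation (poissonBinomial p s) (fun k => (k - ∑ i ∈ s, p i) * f k) =
      ∑ i ∈ s, p i * (1 - p i) *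
        pgfExpectation (poissonBinomial p (s.erase i)) (fun k => f (k + 1) - f k) := by
  have hlin : pgfExpectation (poissonBinomial p s) (fun k => (k - ∑ i ∈ s, p i) * f k) =
      pgfExpectation (poissonBinomial p s) (fun k => k * f k) -
        (∑ i ∈ s, p i) * pgfExpectation (poissonBinomial p s) f := by
    rw [← smul_eq_mul (∑ i ∈ s, p i), ← map_smul, ← map_sub]
    exact congrArg _ (funext fun k => sub_mul _ _ _)
  rw [hlin, pgfExpectation_poissonBinomial_nat_mul, sum_mul, ← sum_sub_distrib]
  refine sum_congr rfl fun i hi => ?_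
  have hsub : pgfExpectation (poissonBinomial p (s.erase i)) (fun k => f (k + 1) - f k) =
      pgfExpectation (poissonBinomial p (s.erase i)) (fun k => f (k + 1)) -
        pgfExpectation (poissonBinomial p (s.erase i)) f := map_sub _ _ _
  rw [hsub, pgfExpectation_poissonBinomial_erase p hi f]
  ring

theorem pgfExpectation_poissonBinomial_nat :
    pgfExpectation (poissonBinomial p s) (fun k => (k : R)) = ∑ i ∈ s, p i := by
  classical
  simpa [pgfExpectation_poissonBinomial_const] using
    pgfExpectation_poissonBinomial_nat_mul p (s := s) fun _ => 1

theorem pgfExpectation_poissonBinomial_sub_mean_sq :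
    pgfExpectation (poissonBinomial p s) (fun k => (k - ∑ i ∈ s, p i) ^ 2) =
      ∑ i ∈ s, p i * (1 - p i) := by
  classical
  simpa [pgfExpectation_poissonBinomial_const, ← sq] using
    pgfExpectation_poissonBinomial_sub_mean_mul p (s := s) fun k => k - ∑ i ∈ s, p i

end PoissonBinomial

section RealPoissonBinomial

variable {ι : Type*} {p : ι → ℝ} {s : Finset ι}

theorem pgfExpectation_poissonBinomial_mono (hp : ∀ i, p i ∈ Set.Icc 0 1) {f g : ℕ → ℝ}
    (hfg : ∀ k, f k ≤ g k) :
    pgfExpectation (poissonBinomial p s) f ≤ pgfExpectation (poissonBinomial p s) g := by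
  classical
  induction s using Finset.induction_on generalizing f g with
  | empty => simpa [poissonBinomial] using hfg 0
  | insert i s hi ih =>
    rw [pgfExpectation_poissonBinomial_insert p hi, pgfExpectation_poissonBinomial_insert p hi]
    exact add_le_add (mul_le_mul_of_nonneg_left (ih hfg) (sub_nonneg.2 (hp i).2))
      (mul_le_mul_of_nonneg_left (ih fun k => hfg (k + 1)) (hp i).1)

theorem pgfExpectation_poissonBinomial_sub_mean_mul_le (hp : ∀ i, p i ∈ Set.Icc 0 1)
    {f g : ℕ → ℝ} (hfg : ∀ k, f (k + 1) - f k ≤ g k) (hfg' : ∀ k, f (k + 1) - f k ≤ g (k + 1)) :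
    pgfExpectation (poissonBinomial p s) (fun k => (k - ∑ i ∈ s, p i) * f k) ≤
      (∑ i ∈ s, p i * (1 - p i)) * pgfExpectation (poissonBinomial p s) g := by
  classical
  rw [pgfExpectation_poissonBinomial_sub_mean_mul, sum_mul]
  refine sum_le_sum fun i hi => ?_
  have hpi := hp i
  refine mul_le_mul_of_nonneg_left ?_ (mul_nonneg hpi.1 (sub_nonneg.2 hpi.2))
  rw [pgfExpectation_poissonBinomial_erase p hi g]
  have h₀ := pgfExpectation_poissonBinomial_mono (s := s.erase i) hp hfg
  have h₁ := pgfExpectation_poissonBinomial_mono (s := s.erase i) hp hfg'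
  nlinarith [mul_le_mul_of_nonneg_left h₀ (sub_nonneg.2 hpi.2),
    mul_le_mul_of_nonneg_left h₁ hpi.1]

end RealPoissonBinomial

section RealRooted

theorem splits_derivative_of_splits {p : ℝ[X]} (hp : p.Splits) : p.derivative.Splits := by
  rw [splits_iff_card_roots] at hp ⊢
  have := card_roots_le_derivative p
  have := natDegree_derivative_le p
  have := card_roots' (derivative p)
  omega

variable {P : ℝ[X]}

theorem root_nonpos_of_eval_pos (hpos : ∀ x, 0 < x → 0 < P.eval x) (r : P.roots) : (r : ℝ) ≤ 0 :=
  not_lt.1 fun h => (hpos r h).ne' (isRoot_of_mem_roots Multiset.coe_mem)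

theorem inv_one_sub_root_mem_Icc (hpos : ∀ x, 0 < x → 0 < P.eval x) (r : P.roots) :
    (1 - (r : ℝ))⁻¹ ∈ Set.Icc 0 1 := by
  have hr := root_nonpos_of_eval_pos hpos r
  exact ⟨inv_nonneg.2 (by linarith), inv_le_one_of_one_le₀ (by linarith)⟩

theorem eq_C_mul_poissonBinomial (hP : P.Splits) (hpos : ∀ x, 0 < x → 0 < P.eval x) :
    P = C (P.eval 1) * poissonBinomial (fun r : P.roots => (1 - (r : ℝ))⁻¹) univ := by
  have hfactor (r : P.roots) :
      X - C (r : ℝ) = C (1 - (r : ℝ)) * (C (1 - (1 - (r : ℝ))⁻¹) + C (1 - (r : ℝ))⁻¹ * X) := by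
    have hr : (1 - (r : ℝ)) ≠ 0 := by linarith [root_nonpos_of_eval_pos hpos r]
    rw [mul_add, ← mul_assoc, ← C_mul, ← C_mul, mul_inv_cancel₀ hr, mul_sub, mul_inv_cancel₀ hr]
    simp only [mul_one, map_sub, map_one]
    ring
  have hprod : P = C (P.leadingCoeff * ∏ r : P.roots, (1 - (r : ℝ))) *
      poissonBinomial (fun r : P.roots => (1 - (r : ℝ))⁻¹) univ := by
    conv_lhs => rw [hP.eq_prod_roots, ← Multiset.map_univ, prod_map_val]
    rw [prod_congr rfl fun r _ => hfactor r, prod_mul_distrib, ← poissonBinomial, C_mul,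
      map_prod, mul_assoc]
  have heval := congrArg (eval 1) hprod
  rw [eval_C_mul, eval_one_poissonBinomial, mul_one] at heval
  rwa [heval]

end RealRooted

section Gaussian

open Set MeasureTheory ProbabilityTheory

theorem hasDerivAt_setIntegral_Iic {f : ℝ → ℝ} (hf : Integrable f) (hc : Continuous f) (x : ℝ) :
    HasDerivAt (fun x => ∫ t in Iic x, f t) (f x) x := by
  have hsplit (y : ℝ) : ∫ t in Iic y, f t = (∫ t in Iic 0, f t) + ∫ t in (0)..y, f t := by
    rw [← intervalIntegral.integral_Iic_sub_Iic hf.integrableOn hf.integrableOn, add_sub_cancel]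
  exact ((hc.integral_hasStrictDerivAt 0 x).hasDerivAt.const_add _).congr_of_eventuallyEq
    (.of_forall hsplit)

theorem setIntegral_Iic_of_hasDerivAt_of_integrable {f f' : ℝ → ℝ}
    (hderiv : ∀ x, HasDerivAt f (f' x) x) (hf' : Integrable f') (hf : Integrable f) (a : ℝ) :
    ∫ x in Iic a, f' x = f a := by
  have htendsto := tendsto_zero_of_hasDerivAt_of_integrableOn_Iic (a := a) (fun x _ => hderiv x)
    hf'.integrableOn hf.integrableOn
  rw [integral_Iic_of_hasDerivAt_of_tendsto' (fun x _ => hderiv x) hf'.integrableOn htendsto,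
    sub_zero]

local notation "φ" => gaussianPDFReal 0 1
local notation "Φ" => stdGaussianCDF

theorem gaussianPDFReal_zero_one (x : ℝ) :
    φ x = (√(2 * Real.pi))⁻¹ * Real.exp (-(1 / 2) * x ^ 2) := by
  rw [gaussianPDFReal, NNReal.coe_one, mul_one, sub_zero, mul_one, neg_mul, one_div_mul_eq_div,
    neg_div]

theorem hasDerivAt_gaussianPDFReal_zero_one (x : ℝ) : HasDerivAt φ (-x * φ x) x := by
  have hexp := ((((hasDerivAt_pow 2 x).const_mul (-(1 / 2))).exp).const_mul (√(2 * Real.pi))⁻¹)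
  refine (hexp.congr_deriv ?_).congr_of_eventuallyEq (.of_forall gaussianPDFReal_zero_one)
  rw [gaussianPDFReal_zero_one]
  push_cast
  ring

theorem continuous_gaussianPDFReal_zero_one : Continuous φ :=
  continuous_iff_continuousAt.2 fun x => (hasDerivAt_gaussianPDFReal_zero_one x).continuousAt

theorem gaussianPDFReal_zero_one_pos (x : ℝ) : 0 < φ x := gaussianPDFReal_pos 0 1 x one_ne_zero

theorem gaussianPDFReal_zero_one_neg (x : ℝ) : φ (-x) = φ x := by
  rw [gaussianPDFReal_zero_one, gaussianPDFReal_zero_one, neg_sq]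

theorem gaussianPDFReal_zero_one_le_one (x : ℝ) : φ x ≤ 1 := by
  rw [gaussianPDFReal_zero_one]
  exact mul_le_one₀
    (inv_le_one_of_one_le₀ (Real.one_le_sqrt.2 (by linarith [Real.pi_gt_three])))
    (Real.exp_nonneg _) (Real.exp_le_one_iff.2 (by nlinarith [sq_nonneg x]))

theorem integrable_mul_gaussianPDFReal_zero_one : Integrable fun x => x * φ x := by
  simpa only [gaussianPDFReal_zero_one, mul_left_comm] using
    (integrable_mul_exp_neg_mul_sq one_half_pos).const_mul (√(2 * Real.pi))⁻¹

theorem integrable_sq_mul_gaussianPDFReal_zero_one : Integrable fun x => x ^ 2 * φ x := by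
  have h := (integrable_rpow_mul_exp_neg_mul_sq one_half_pos (s := (2 : ℕ)) (by norm_num)).const_mul
    (√(2 * Real.pi))⁻¹
  simpa only [Real.rpow_natCast, gaussianPDFReal_zero_one, mul_left_comm] using h

theorem stdGaussianCDF_eq (x : ℝ) : Φ x = ∫ t in Iic x, φ t := by
  refine integral_congr_ae (.of_forall fun t => ?_)
  simp [gaussianPDFReal, div_eq_inv_mul]

theorem hasDerivAt_stdGaussianCDF (x : ℝ) : HasDerivAt Φ (φ x) x := by
  simpa only [← stdGaussianCDF_eq] using
    hasDerivAt_setIntegral_Iic (integrable_gaussianPDFReal 0 1)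
      continuous_gaussianPDFReal_zero_one x

theorem continuous_stdGaussianCDF : Continuous Φ :=
  continuous_iff_continuousAt.2 fun x => (hasDerivAt_stdGaussianCDF x).continuousAt

theorem stdGaussianCDF_neg (x : ℝ) : Φ (-x) = 1 - Φ x := by
  have hsymm : Φ (-x) = ∫ t in Ioi x, φ t := by
    rw [stdGaussianCDF_eq, ← neg_neg x, ← integral_comp_neg_Iic, neg_neg]
    simp only [gaussianPDFReal_zero_one_neg]
  rw [hsymm, stdGaussianCDF_eq, ← integral_gaussianPDFReal_eq_one 0 one_ne_zero,
    ← integral_add_compl measurableSet_Iic (integrable_gaussianPDFReal 0 1), compl_Iic,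
    add_sub_cancel_left]

theorem stdGaussianCDF_nonneg (x : ℝ) : 0 ≤ Φ x := by
  rw [stdGaussianCDF_eq]
  exact integral_nonneg (gaussianPDFReal_nonneg 0 1)

theorem stdGaussianCDF_le_one (x : ℝ) : Φ x ≤ 1 := by
  linarith [stdGaussianCDF_nonneg (-x), stdGaussianCDF_neg x]

theorem monotone_stdGaussianCDF : Monotone Φ :=
  monotone_of_hasDerivAt_nonneg hasDerivAt_stdGaussianCDF (gaussianPDFReal_nonneg 0 1)

theorem stdGaussianCDF_sub_le {x y : ℝ} (hxy : x ≤ y) : Φ y - Φ x ≤ y - x := by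
  have hmono : Monotone fun t => t - Φ t :=
    monotone_of_hasDerivAt_nonneg
      (fun t => (hasDerivAt_id' t).fun_sub (hasDerivAt_stdGaussianCDF t))
      fun t => sub_nonneg.2 (gaussianPDFReal_zero_one_le_one t)
  have := hmono hxy
  simp only at this
  linarith

section MillsRatio

theorem setIntegral_Iic_mul_gaussianPDFReal (w : ℝ) : ∫ t in Iic w, t * φ t = -φ w := by
  simpa only [neg_mul, integral_neg, neg_eq_iff_eq_neg] using
    setIntegral_Iic_of_hasDerivAt_of_integrable hasDerivAt_gaussianPDFReal_zero_one
      (by simpa only [neg_mul] using integrable_mul_gaussianPDFReal_zero_one.fun_neg)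
      (integrable_gaussianPDFReal 0 1) w

theorem setIntegral_Iic_sq_mul_gaussianPDFReal (w : ℝ) :
    ∫ t in Iic w, t ^ 2 * φ t = Φ w - w * φ w := by
  have hderiv (t : ℝ) : HasDerivAt (fun t => t * φ t) (φ t - t ^ 2 * φ t) t :=
    ((hasDerivAt_id' t).fun_mul (hasDerivAt_gaussianPDFReal_zero_one t)).congr_deriv (by ring)
  have hint := (integrable_gaussianPDFReal 0 1).sub integrable_sq_mul_gaussianPDFReal_zero_one
  have := setIntegral_Iic_of_hasDerivAt_of_integrable hderiv hint
    integrable_mul_gaussianPDFReal_zero_one w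
  rw [integral_sub (integrable_gaussianPDFReal 0 1).integrableOn
    integrable_sq_mul_gaussianPDFReal_zero_one.integrableOn, ← stdGaussianCDF_eq] at this
  linarith

theorem gaussianPDFReal_add_mul_stdGaussianCDF_nonneg (w : ℝ) : 0 ≤ φ w + w * Φ w := by
  have hint : ∫ t in Iic w, (w - t) * φ t = φ w + w * Φ w := by
    simp only [sub_mul]
    rw [integral_sub ((integrable_gaussianPDFReal 0 1).const_mul w).integrableOn
      integrable_mul_gaussianPDFReal_zero_one.integrableOn, integral_const_mul,
      setIntegral_Iic_mul_gaussianPDFReal, ← stdGaussianCDF_eq]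
    ring
  rw [← hint]
  exact setIntegral_nonneg measurableSet_Iic fun t ht =>
    mul_nonneg (sub_nonneg.2 ht) (gaussianPDFReal_nonneg 0 1 t)

theorem one_add_sq_mul_stdGaussianCDF_add_nonneg (w : ℝ) :
    0 ≤ (1 + w ^ 2) * Φ w + w * φ w := by
  have h₁ := integrable_mul_gaussianPDFReal_zero_one
  have h₂ := integrable_sq_mul_gaussianPDFReal_zero_one
  have h₀ := integrable_gaussianPDFReal 0 1
  have h₀₁ : Integrable fun t => w ^ 2 * φ t - 2 * w * (t * φ t) :=
    (h₀.const_mul _).sub (h₁.const_mul _)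
  have hint : ∫ t in Iic w, (w - t) ^ 2 * φ t = (1 + w ^ 2) * Φ w + w * φ w := by
    have hexpand (t : ℝ) :
        (w - t) ^ 2 * φ t = w ^ 2 * φ t - 2 * w * (t * φ t) + t ^ 2 * φ t := by ring
    simp only [hexpand]
    rw [integral_add h₀₁.integrableOn h₂.integrableOn,
      integral_sub (h₀.const_mul _).integrableOn (h₁.const_mul _).integrableOn,
      integral_const_mul, integral_const_mul, setIntegral_Iic_mul_gaussianPDFReal,
      setIntegral_Iic_sq_mul_gaussianPDFReal, ← stdGaussianCDF_eq]
    ring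
  rw [← hint]
  exact integral_nonneg fun t => mul_nonneg (sq_nonneg _) (gaussianPDFReal_nonneg 0 1 t)

/-- The Mills ratio `Φ / φ` of the standard Gaussian distribution, here for the lower tail. -/
noncomputable def millsRatio (w : ℝ) : ℝ := Φ w / φ w

theorem millsRatio_nonneg (w : ℝ) : 0 ≤ millsRatio w :=
  div_nonneg (stdGaussianCDF_nonneg w) (gaussianPDFReal_nonneg 0 1 w)

theorem one_add_mul_millsRatio_nonneg (w : ℝ) : 0 ≤ 1 + w * millsRatio w := by
  have h : 1 + w * millsRatio w = (φ w + w * Φ w) / φ w := by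
    rw [millsRatio, add_div, div_self (gaussianPDFReal_zero_one_pos w).ne', mul_div_assoc]
  rw [h]
  exact div_nonneg (gaussianPDFReal_add_mul_stdGaussianCDF_nonneg w)
    (gaussianPDFReal_nonneg 0 1 w)

theorem hasDerivAt_millsRatio (w : ℝ) : HasDerivAt millsRatio (1 + w * millsRatio w) w := by
  have hφ := (gaussianPDFReal_zero_one_pos w).ne'
  refine ((hasDerivAt_stdGaussianCDF w).fun_div (hasDerivAt_gaussianPDFReal_zero_one w)
    hφ).congr_deriv ?_
  rw [millsRatio]
  field_simp
  ring

theorem monotone_millsRatio : Monotone millsRatio :=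
  monotone_of_hasDerivAt_nonneg hasDerivAt_millsRatio one_add_mul_millsRatio_nonneg

theorem monotone_mul_millsRatio : Monotone fun w => w * millsRatio w := by
  refine monotone_of_hasDerivAt_nonneg
    (fun w => (hasDerivAt_id' w).fun_mul (hasDerivAt_millsRatio w)) fun w => ?_
  have h : 1 * millsRatio w + w * (1 + w * millsRatio w) =
      ((1 + w ^ 2) * Φ w + w * φ w) / φ w := by
    have hφ := (gaussianPDFReal_zero_one_pos w).ne'
    rw [millsRatio]
    field_simp
    ring
  simp only [Pi.zero_apply, h]
  exact div_nonneg (one_add_sq_mul_stdGaussianCDF_add_nonneg w) (gaussianPDFReal_nonneg 0 1 w)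

end MillsRatio

section SteinSolution

/-- The bounded solution `f` of Stein's equation `f' w - w * f w = 1[w < z] - Φ z` for the
half-line ending at `z`. -/
noncomputable def steinSolution (z w : ℝ) : ℝ := Φ (min w z) * Φ (-max w z) / φ w

theorem steinSolution_of_le {z w : ℝ} (hwz : w ≤ z) :
    steinSolution z w = Φ (-z) * millsRatio w := by
  rw [steinSolution, millsRatio, min_eq_left hwz, max_eq_right hwz, mul_comm, mul_div_assoc]

theorem steinSolution_of_ge {z w : ℝ} (hzw : z ≤ w) :
    steinSolution z w = Φ z * millsRatio (-w) := by
  rw [steinSolution, millsRatio, min_eq_right hzw, max_eq_left hzw, gaussianPDFReal_zero_one_neg,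
    mul_div_assoc]

theorem steinSolution_nonneg (z w : ℝ) : 0 ≤ steinSolution z w :=
  div_nonneg (mul_nonneg (stdGaussianCDF_nonneg _) (stdGaussianCDF_nonneg _))
    (gaussianPDFReal_nonneg 0 1 w)

theorem steinSolution_le_millsRatio (z w : ℝ) : steinSolution z w ≤ millsRatio (-|w|) := by
  rw [millsRatio, gaussianPDFReal_zero_one_neg, steinSolution]
  rcases abs_cases w with ⟨hw, -⟩ | ⟨hw, -⟩
  · rw [hw]
    exact div_le_div_of_nonneg_right
      ((mul_le_of_le_one_left (stdGaussianCDF_nonneg _) (stdGaussianCDF_le_one _)).trans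
        (monotone_stdGaussianCDF (neg_le_neg (le_max_left w z)))) (gaussianPDFReal_nonneg 0 1 w)
  · rw [hw, neg_neg, gaussianPDFReal_zero_one_neg]
    exact div_le_div_of_nonneg_right
      ((mul_le_of_le_one_right (stdGaussianCDF_nonneg _) (stdGaussianCDF_le_one _)).trans
        (monotone_stdGaussianCDF (min_le_left w z))) (gaussianPDFReal_nonneg 0 1 w)

theorem steinSolution_le_millsRatio_zero (z w : ℝ) : steinSolution z w ≤ millsRatio 0 :=
  (steinSolution_le_millsRatio z w).trans (monotone_millsRatio (by simp))

theorem abs_mul_steinSolution_le_one (z w : ℝ) : |w * steinSolution z w| ≤ 1 := by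
  rw [abs_mul, abs_of_nonneg (steinSolution_nonneg z w)]
  have := one_add_mul_millsRatio_nonneg (-|w|)
  linarith [mul_le_mul_of_nonneg_left (steinSolution_le_millsRatio z w) (abs_nonneg w)]

theorem continuous_steinSolution (z : ℝ) : Continuous (steinSolution z) := by
  have hΦ := continuous_stdGaussianCDF
  exact ((hΦ.comp (continuous_id.min continuous_const)).mul
    (hΦ.comp (continuous_id.max continuous_const).neg)).div continuous_gaussianPDFReal_zero_one
    fun w => (gaussianPDFReal_zero_one_pos w).ne'

theorem hasDerivWithinAt_steinSolution_Ici (z w : ℝ) :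
    HasDerivWithinAt (steinSolution z)
      (w * steinSolution z w + (if w < z then 1 else 0) - Φ z) (Ici w) w := by
  split_ifs with hwz
  · have h := (hasDerivAt_millsRatio w).const_mul (Φ (-z))
    refine ((h.congr_of_eventuallyEq ?_).congr_deriv ?_).hasDerivWithinAt
    · filter_upwards [Iio_mem_nhds hwz] with y hy using steinSolution_of_le hy.le
    · rw [steinSolution_of_le hwz.le, stdGaussianCDF_neg]
      ring
  · have hzw := not_lt.1 hwz
    have h := ((hasDerivAt_millsRatio (-w)).scomp w (hasDerivAt_neg w)).const_mul (Φ z)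
    refine ((h.hasDerivWithinAt (s := Ici w)).congr (fun y hy => ?_) ?_).congr_deriv ?_
    · exact steinSolution_of_ge (hzw.trans hy)
    · exact steinSolution_of_ge hzw
    · rw [steinSolution_of_ge hzw, smul_eq_mul]
      ring

theorem monotone_mul_steinSolution (z : ℝ) : Monotone fun w => w * steinSolution z w := by
  have hle : MonotoneOn (fun w => w * steinSolution z w) (Iic z) := by
    intro u hu v hv huv
    simp only [steinSolution_of_le (mem_Iic.1 hu), steinSolution_of_le (mem_Iic.1 hv),
      mul_left_comm _ (Φ (-z))]
    exact mul_le_mul_of_nonneg_left (monotone_mul_millsRatio huv) (stdGaussianCDF_nonneg _)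
  have hge : MonotoneOn (fun w => w * steinSolution z w) (Ici z) := by
    intro u hu v hv huv
    simp only [steinSolution_of_ge (mem_Ici.1 hu), steinSolution_of_ge (mem_Ici.1 hv),
      mul_left_comm _ (Φ z)]
    refine mul_le_mul_of_nonneg_left ?_ (stdGaussianCDF_nonneg _)
    simpa only [neg_mul, neg_le_neg_iff] using monotone_mul_millsRatio (neg_le_neg huv)
  exact hle.Iic_union_Ici hge

theorem image_sub_le_mul_sub_of_deriv_right_le {f f' : ℝ → ℝ} {a b D : ℝ}
    (hf : ContinuousOn f (Icc a b)) (hf' : ∀ x ∈ Ico a b, HasDerivWithinAt f (f' x) (Ici x) x)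
    (hD : ∀ x ∈ Ico a b, f' x ≤ D) (hab : a ≤ b) : f b - f a ≤ D * (b - a) := by
  have hline (x : ℝ) : HasDerivAt (fun x => f a + D * (x - a)) D x :=
    ((((hasDerivAt_id' x).sub_const a).const_mul D).const_add (f a)).congr_deriv (mul_one D)
  exact sub_le_iff_le_add'.2 <| image_le_of_deriv_right_le_deriv_boundary hf hf' (by simp)
    (by fun_prop) (fun x _ => (hline x).hasDerivWithinAt) hD (right_mem_Icc.2 hab)

theorem steinSolution_sub_le {z u v : ℝ} (huv : u ≤ v) :
    steinSolution z v - steinSolution z u ≤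
      ((if u ≤ z then 1 else 0) - Φ z + v * steinSolution z v) * (v - u) := by
  refine image_sub_le_mul_sub_of_deriv_right_le (continuous_steinSolution z).continuousOn
    (fun x _ => hasDerivWithinAt_steinSolution_Ici z x) (fun x hx => ?_) huv
  have hmono : x * steinSolution z x ≤ v * steinSolution z v :=
    monotone_mul_steinSolution z hx.2.le
  have hind : (if x < z then (1 : ℝ) else 0) ≤ if u ≤ z then 1 else 0 := by
    split_ifs with hxz huz <;> linarith [hx.1]
  linarith

theorem le_steinSolution_sub {z u v : ℝ} (huv : u ≤ v) :
    ((if v ≤ z then 1 else 0) - Φ z + u * steinSolution z u) * (v - u) ≤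
      steinSolution z v - steinSolution z u := by
  have hneg : -steinSolution z v - -steinSolution z u ≤
      -((if v ≤ z then 1 else 0) - Φ z + u * steinSolution z u) * (v - u) := by
    refine image_sub_le_mul_sub_of_deriv_right_le (continuous_steinSolution z).neg.continuousOn
      (fun x _ => (hasDerivWithinAt_steinSolution_Ici z x).neg) (fun x hx => ?_) huv
    have hmono : u * steinSolution z u ≤ x * steinSolution z x :=
      monotone_mul_steinSolution z hx.1
    have hind : (if v ≤ z then (1 : ℝ) else 0) ≤ if x < z then 1 else 0 := by
      split_ifs with hvz hxz <;> linarith [hx.2]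
    linarith
  linarith

theorem abs_steinSolution_sub_le_of_le {z u v : ℝ} (huv : u ≤ v) :
    |steinSolution z v - steinSolution z u| ≤ 2 * (v - u) := by
  have hΦ₀ := stdGaussianCDF_nonneg z
  have hΦ₁ := stdGaussianCDF_le_one z
  have hu := abs_le.1 (abs_mul_steinSolution_le_one z u)
  have hv := abs_le.1 (abs_mul_steinSolution_le_one z v)
  have huv' := sub_nonneg.2 huv
  rw [abs_le, ← neg_mul]
  constructor
  · refine le_trans (mul_le_mul_of_nonneg_right ?_ huv') (le_steinSolution_sub huv)
    split_ifs <;> linarith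
  · refine (steinSolution_sub_le huv).trans (mul_le_mul_of_nonneg_right ?_ huv')
    split_ifs <;> linarith

theorem abs_steinSolution_sub_le (z u v : ℝ) :
    |steinSolution z v - steinSolution z u| ≤ 2 * |v - u| := by
  rcases le_total u v with huv | hvu
  · rw [abs_of_nonneg (sub_nonneg.2 huv)]
    exact abs_steinSolution_sub_le_of_le huv
  · rw [abs_sub_comm, abs_sub_comm v u, abs_of_nonneg (sub_nonneg.2 hvu)]
    exact abs_steinSolution_sub_le_of_le hvu

theorem abs_mul_steinSolution_sub_le (z u v : ℝ) :
    |v * steinSolution z v - u * steinSolution z u| ≤ (u ^ 2 + 1 + millsRatio 0) * |v - u| := by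
  have hsplit : v * steinSolution z v - u * steinSolution z u =
      u * (steinSolution z v - steinSolution z u) + steinSolution z v * (v - u) := by ring
  have hbound : |steinSolution z v| ≤ millsRatio 0 := by
    rw [abs_of_nonneg (steinSolution_nonneg z v)]
    exact steinSolution_le_millsRatio_zero z v
  calc |v * steinSolution z v - u * steinSolution z u|
      ≤ |u| * |steinSolution z v - steinSolution z u| + |steinSolution z v| * |v - u| := by
        rw [hsplit, ← abs_mul, ← abs_mul]
        exact abs_add_le _ _
    _ ≤ |u| * (2 * |v - u|) + millsRatio 0 * |v - u| := by
        gcongr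
        exact abs_steinSolution_sub_le z u v
    _ = (2 * |u| + millsRatio 0) * |v - u| := by ring
    _ ≤ (u ^ 2 + 1 + millsRatio 0) * |v - u| := by
        gcongr
        nlinarith [sq_nonneg (|u| - 1), sq_abs u]

end SteinSolution

end Gaussian

section BerryEsseen

variable {ι : Type*} {p : ι → ℝ} {s : Finset ι}

/-- The value taken by the standardized Poisson binomial variable when the variable itself takes
the value `k`. -/
noncomputable def standardize (p : ι → ℝ) (s : Finset ι) (k : ℕ) : ℝ :=
  (k - ∑ i ∈ s, p i) / √(∑ i ∈ s, p i * (1 - p i))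

theorem standardize_succ (p : ι → ℝ) (s : Finset ι) (k : ℕ) :
    standardize p s (k + 1) = standardize p s k + (√(∑ i ∈ s, p i * (1 - p i)))⁻¹ := by
  simp only [standardize, Nat.cast_add, Nat.cast_one, div_eq_mul_inv]
  ring

theorem pgfExpectation_add_mul_standardize_sq (hs : 0 < ∑ i ∈ s, p i * (1 - p i)) (h : ℕ → ℝ)
    (a b : ℝ) :
    pgfExpectation (poissonBinomial p s) (fun k => h k + a + b * standardize p s k ^ 2) =
      pgfExpectation (poissonBinomial p s) h + a + b := by
  have hlin : (fun k => h k + a + b * standardize p s k ^ 2) = h + (fun _ => a) +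
      (b / ∑ i ∈ s, p i * (1 - p i)) • fun k : ℕ => ((k : ℝ) - ∑ i ∈ s, p i) ^ 2 := by
    ext k
    rw [standardize, div_pow, Real.sq_sqrt hs.le]
    simp only [Pi.add_apply, Pi.smul_apply, smul_eq_mul]
    ring
  rw [hlin, map_add, map_add, map_smul, pgfExpectation_poissonBinomial_const,
    pgfExpectation_poissonBinomial_sub_mean_sq, smul_eq_mul, div_mul_cancel₀ _ hs.ne']

theorem pgfExpectation_standardize_nonneg_of_stein (hp : ∀ i, p i ∈ Set.Icc 0 1)
    (hs : 0 < ∑ i ∈ s, p i * (1 - p i)) {f g r : ℝ → ℝ} {ε : ℝ}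
    (hε : ε = (√(∑ i ∈ s, p i * (1 - p i)))⁻¹)
    (hfg : ∀ w, f (w + ε) - f w ≤ g w * ε) (hgr : ∀ w, g w ≤ w * f w + r w)
    (hgr' : ∀ w, g w ≤ (w + ε) * f (w + ε) + r (w + ε)) :
    0 ≤ pgfExpectation (poissonBinomial p s) (fun k => r (standardize p s k)) := by
  set W := standardize p s
  set V := ∑ i ∈ s, p i * (1 - p i)
  have hσ : 0 < √V := Real.sqrt_pos.2 hs
  have hε₀ : 0 ≤ ε := hε ▸ (inv_pos.2 hσ).le
  have hVε : V * ε = √V := by rw [hε, ← div_eq_mul_inv, Real.div_sqrt]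
  have hsucc (k : ℕ) : W (k + 1) = W k + ε := hε ▸ standardize_succ p s k
  have hcomparison := pgfExpectation_poissonBinomial_sub_mean_mul_le (s := s) hp
    (f := fun k => f (W k)) (g := ε • fun k => W k * f (W k) + r (W k))
    (fun k => by
      rw [hsucc, Pi.smul_apply, smul_eq_mul, mul_comm ε]
      exact (hfg _).trans (mul_le_mul_of_nonneg_right (hgr _) hε₀))
    (fun k => by
      rw [Pi.smul_apply, hsucc, smul_eq_mul, mul_comm ε]
      exact (hfg _).trans (mul_le_mul_of_nonneg_right (hgr' _) hε₀))
  have hleft : (fun k : ℕ => ((k : ℝ) - ∑ i ∈ s, p i) * f (W k)) = √V • fun k => W k * f (W k) := by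
    ext k
    rw [Pi.smul_apply, smul_eq_mul, ← mul_assoc]
    congr 1
    exact (mul_div_cancel₀ _ hσ.ne').symm
  have hright : (fun k => W k * f (W k) + r (W k)) = (fun k => W k * f (W k)) + fun k => r (W k) :=
    rfl
  rw [hleft, map_smul, map_smul, hright, map_add, smul_eq_mul, smul_eq_mul, ← mul_assoc, hVε]
    at hcomparison
  linarith [le_of_mul_le_mul_left hcomparison hσ]

theorem stdGaussianCDF_le_pgfExpectation_add (hp : ∀ i, p i ∈ Set.Icc 0 1)
    (hs : 0 < ∑ i ∈ s, p i * (1 - p i)) {ε : ℝ}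
    (hε : ε = (√(∑ i ∈ s, p i * (1 - p i)))⁻¹) (z : ℝ) :
    stdGaussianCDF z ≤ pgfExpectation (poissonBinomial p s)
      (fun k => if standardize p s k ≤ z + ε then 1 else 0) + ε * (2 + millsRatio 0) := by
  have hε₀ : 0 < ε := hε ▸ inv_pos.2 (Real.sqrt_pos.2 hs)
  have h := pgfExpectation_standardize_nonneg_of_stein hp hs (f := steinSolution z)
    (g := fun w => (if w ≤ z then 1 else 0) - stdGaussianCDF z +
      (w + ε) * steinSolution z (w + ε))
    (r := fun w => (if w ≤ z + ε then 1 else 0) +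
      (ε * (1 + millsRatio 0) - stdGaussianCDF z) + ε * w ^ 2)
    hε (fun w => ?_) (fun w => ?_) fun w => ?_
  · rw [pgfExpectation_add_mul_standardize_sq hs] at h
    linarith
  · simpa using steinSolution_sub_le (z := z) (le_add_of_nonneg_right hε₀.le : w ≤ w + ε)
  · have hdiff := (abs_le.1 (abs_mul_steinSolution_sub_le z w (w + ε))).2
    rw [add_sub_cancel_left, abs_of_pos hε₀] at hdiff
    have hind : (if w ≤ z then (1 : ℝ) else 0) ≤ if w ≤ z + ε then 1 else 0 := by
      split_ifs <;> linarith
    linarith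
  · have := millsRatio_nonneg 0
    simp only [add_le_add_iff_right]
    nlinarith [sq_nonneg (w + ε)]

theorem pgfExpectation_le_stdGaussianCDF_add (hp : ∀ i, p i ∈ Set.Icc 0 1)
    (hs : 0 < ∑ i ∈ s, p i * (1 - p i)) {ε : ℝ}
    (hε : ε = (√(∑ i ∈ s, p i * (1 - p i)))⁻¹) (z : ℝ) :
    pgfExpectation (poissonBinomial p s) (fun k => if standardize p s k ≤ z - ε then 1 else 0) ≤
      stdGaussianCDF z + ε * (2 + millsRatio 0) := by
  have hε₀ : 0 < ε := hε ▸ inv_pos.2 (Real.sqrt_pos.2 hs)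
  have h := pgfExpectation_standardize_nonneg_of_stein hp hs (f := fun w => -steinSolution z w)
    (g := fun w => -((if w + ε ≤ z then 1 else 0) - stdGaussianCDF z + w * steinSolution z w))
    (r := fun w => -(if w ≤ z - ε then 1 else 0) +
      (ε * (1 + millsRatio 0) + stdGaussianCDF z) + ε * w ^ 2)
    hε (fun w => ?_) (fun w => ?_) fun w => ?_
  · rw [pgfExpectation_add_mul_standardize_sq hs] at h
    have hneg := map_neg (pgfExpectation (poissonBinomial p s))
      fun k => if standardize p s k ≤ z - ε then 1 else 0
    simp only [Pi.neg_def] at hneg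
    linarith
  · have := le_steinSolution_sub (z := z) (le_add_of_nonneg_right hε₀.le : w ≤ w + ε)
    rw [add_sub_cancel_left] at this
    linarith
  · have := millsRatio_nonneg 0
    simp only [le_sub_iff_add_le]
    nlinarith [sq_nonneg w]
  · have hdiff := (abs_le.1 (abs_mul_steinSolution_sub_le z (w + ε) w)).1
    rw [sub_add_cancel_left, abs_neg, abs_of_pos hε₀] at hdiff
    have hind : (if w + ε ≤ z - ε then (1 : ℝ) else 0) ≤ if w + ε ≤ z then 1 else 0 := by
      split_ifs <;> linarith
    linarith

theorem abs_pgfExpectation_poissonBinomial_sub_stdGaussianCDF_le (hp : ∀ i, p i ∈ Set.Icc 0 1)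
    (hs : 0 < ∑ i ∈ s, p i * (1 - p i)) (x : ℝ) :
    |pgfExpectation (poissonBinomial p s) (fun k => if standardize p s k ≤ x then 1 else 0) -
        stdGaussianCDF x| ≤ (3 + millsRatio 0) / √(∑ i ∈ s, p i * (1 - p i)) := by
  rw [div_eq_inv_mul]
  generalize hε : (√(∑ i ∈ s, p i * (1 - p i)))⁻¹ = ε
  have hε₀ : 0 ≤ ε := hε ▸ inv_nonneg.2 (Real.sqrt_nonneg _)
  have hlower := stdGaussianCDF_le_pgfExpectation_add hp hs hε.symm (x - ε)
  have hupper := pgfExpectation_le_stdGaussianCDF_add hp hs hε.symm (x + ε)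
  rw [sub_add_cancel] at hlower
  rw [add_sub_cancel_right] at hupper
  have hΦ := stdGaussianCDF_sub_le (le_add_of_nonneg_right hε₀ : x ≤ x + ε)
  have hΦ' := stdGaussianCDF_sub_le (sub_le_self x hε₀)
  rw [abs_le]
  constructor <;> linarith

end BerryEsseen

theorem iteratedDeriv_eq_of_hasDerivAt {𝕜 E : Type*} [NontriviallyNormedField 𝕜]
    [NormedAddCommGroup E] [NormedSpace 𝕜 E] {F : ℕ → 𝕜 → E} {U : Set 𝕜} (hU : IsOpen U)
    (hF : ∀ n, ∀ y ∈ U, HasDerivAt (F n) (F (n + 1) y) y) (n : ℕ) {y : 𝕜} (hy : y ∈ U) :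
    iteratedDeriv n (F 0) y = F n y := by
  induction n generalizing y with
  | zero => rw [iteratedDeriv_zero]
  | succ n ih =>
    rw [iteratedDeriv_succ, ← (hF n y hy).deriv]
    exact Filter.EventuallyEq.deriv_eq
      (Filter.eventuallyEq_of_mem (hU.mem_nhds hy) fun _ hz => ih hz)

namespace LemniscateTree

/-- The conditions on a parent function that define a lemniscate tree. -/
def IsParentFunction {N : ℕ} (f : Fin N → Option (Fin N)) : Prop :=
  (∀ i, f i = none ↔ (i : ℕ) = 0) ∧ (∀ i j, f i = some j → (j : ℕ) < (i : ℕ)) ∧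
    ∀ j, #{i | f i = some j} ≤ 2

/-- The number of children of the vertex `j` when `f` assigns to each vertex its parent. -/
def outdegree {N : ℕ} (f : Fin N → Option (Fin N)) (j : Fin N) : ℕ := #{i | f i = some j}

/-- The parent function obtained by adding a new vertex with the largest label as a child
of `j`. -/
def attachLeaf {N : ℕ} (f : Fin N → Option (Fin N)) (j : Fin N) :
    Fin (N + 1) → Option (Fin (N + 1)) :=
  Fin.lastCases (some j.castSucc) fun i => (f i).map Fin.castSucc

section AttachLeaf

variable {N : ℕ} (f : Fin N → Option (Fin N)) (j : Fin N)

@[simp]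
theorem attachLeaf_last : attachLeaf f j (Fin.last N) = some j.castSucc := by
  simp [attachLeaf]

@[simp]
theorem attachLeaf_castSucc (i : Fin N) :
    attachLeaf f j i.castSucc = (f i).map Fin.castSucc := by
  simp [attachLeaf]

theorem outdegree_attachLeaf_castSucc (i : Fin N) :
    outdegree (attachLeaf f j) i.castSucc = outdegree f i + if j = i then 1 else 0 := by
  have h (a : Option (Fin N)) : a.map Fin.castSucc = some i.castSucc ↔ a = some i := by
    cases a <;> simp
  rw [outdegree, outdegree, card_filter, card_filter, Fin.sum_univ_castSucc]
  simp [h]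

theorem outdegree_attachLeaf_last : outdegree (attachLeaf f j) (Fin.last N) = 0 := by
  have h (a : Option (Fin N)) : a.map Fin.castSucc ≠ some (Fin.last N) := by
    cases a <;> simp [Fin.castSucc_ne_last]
  rw [outdegree, card_filter, Fin.sum_univ_castSucc]
  simp [h, Fin.castSucc_ne_last]

end AttachLeaf

theorem isParentFunction_attachLeaf_iff {N : ℕ} {f : Fin (N + 1) → Option (Fin (N + 1))}
    {j : Fin (N + 1)} :
    IsParentFunction (attachLeaf f j) ↔ IsParentFunction f ∧ outdegree f j ≤ 1 := by
  have hdeg : (∀ k, outdegree (attachLeaf f j) k ≤ 2) ↔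
      (∀ k, outdegree f k ≤ 2) ∧ outdegree f j ≤ 1 := by
    rw [Fin.forall_fin_succ' (n := N + 1), outdegree_attachLeaf_last]
    simp only [outdegree_attachLeaf_castSucc]
    refine ⟨fun h => ⟨fun k => le_of_add_le_left (h.1 k), by simpa using h.1 j⟩,
      fun h => ⟨fun k => ?_, zero_le_two⟩⟩
    split_ifs with hjk
    · exact Nat.succ_le_succ (hjk ▸ h.2)
    · exact h.1 k
  have hroot : (∀ i, attachLeaf f j i = none ↔ (i : ℕ) = 0) ↔
      ∀ i, f i = none ↔ (i : ℕ) = 0 := by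
    simp [Fin.forall_fin_succ' (n := N + 1)]
  have hlt : (∀ i k, attachLeaf f j i = some k → (k : ℕ) < (i : ℕ)) ↔
      ∀ i k, f i = some k → (k : ℕ) < (i : ℕ) := by
    rw [Fin.forall_fin_succ' (n := N + 1)]
    simp [Nat.lt_succ_iff.1 j.isLt]
  exact (and_congr hroot (and_congr hlt hdeg)).trans
    (by simp only [IsParentFunction, outdegree, and_assoc])

theorem IsParentFunction.exists_eq_attachLeaf {N : ℕ} {f : Fin (N + 2) → Option (Fin (N + 2))}
    (hf : IsParentFunction f) : ∃ g j, f = attachLeaf g j := by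
  obtain ⟨hroot, hlt, -⟩ := hf
  have hmem (i : Fin (N + 1)) : ∃ a : Option (Fin (N + 1)), a.map Fin.castSucc = f i.castSucc := by
    rcases hfi : f i.castSucc with _ | k
    · exact ⟨none, rfl⟩
    · obtain ⟨k, rfl⟩ := Fin.exists_castSucc_eq.2
        (Fin.ne_last_of_lt ((Fin.lt_def.2 (hlt _ _ hfi)).trans (Fin.castSucc_lt_last i)))
      exact ⟨some k, rfl⟩
  obtain ⟨j, hj⟩ := Option.ne_none_iff_exists'.1 (mt (hroot (Fin.last (N + 1))).1 (by simp))
  obtain ⟨j, rfl⟩ := Fin.exists_castSucc_eq.2 (Fin.ne_last_of_lt (Fin.lt_def.2 (hlt _ _ hj)))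
  choose g hg using hmem
  exact ⟨g, j, funext (Fin.lastCases (by simp [hj]) (by simp [hg]))⟩

/-- Growth of a tree: a new vertex with the largest label is attached to a vertex that has
at most one child. -/
def grow {N : ℕ} (p : Σ T : LemniscateTree (N + 1), {j // outdegree T.1 j ≤ 1}) :
    LemniscateTree (N + 2) :=
  ⟨attachLeaf p.1.1 p.2, isParentFunction_attachLeaf_iff.2 ⟨p.1.2, p.2.2⟩⟩

theorem grow_bijective (N : ℕ) : Function.Bijective (grow (N := N)) := by
  constructor
  · rintro ⟨⟨f, hf⟩, j, hj⟩ ⟨⟨g, hg⟩, k, hk⟩ h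
    have h' : attachLeaf f j = attachLeaf g k := congrArg Subtype.val h
    obtain rfl : j = k := by simpa using congrFun h' (Fin.last _)
    obtain rfl : f = g := funext fun i =>
      Option.map_injective (Fin.castSucc_injective _) (by simpa using congrFun h' i.castSucc)
    rfl
  · intro T
    obtain ⟨g, j, h⟩ := IsParentFunction.exists_eq_attachLeaf T.2
    obtain ⟨hg, hj⟩ := isParentFunction_attachLeaf_iff.1 (h ▸ T.2 : IsParentFunction _)
    exact ⟨⟨⟨g, hg⟩, j, hj⟩, Subtype.ext h.symm⟩

theorem outdegTwoCount_grow {N : ℕ}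
    (p : Σ T : LemniscateTree (N + 1), {j // outdegree T.1 j ≤ 1}) :
    outdegTwoCount (grow p) = outdegTwoCount p.1 + if outdegree p.1.1 p.2 = 1 then 1 else 0 := by
  obtain ⟨T, j, hj⟩ := p
  change #{k | outdegree (attachLeaf T.1 j) k = 2} = #{k | outdegree T.1 k = 2} + _
  have hnew : (if outdegree T.1 j = 1 then 1 else 0) =
      ∑ k, if j = k then (if outdegree T.1 k = 1 then 1 else 0) else 0 := by simp
  simp only [card_filter, Fin.sum_univ_castSucc (n := N + 1), outdegree_attachLeaf_castSucc,
    outdegree_attachLeaf_last, OfNat.zero_ne_ofNat, if_false, add_zero, hnew, ← sum_add_distrib]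
  refine sum_congr rfl fun k _ => ?_
  obtain rfl | hjk := eq_or_ne j k
  · interval_cases outdegree T.1 j <;> simp
  · simp [hjk]

theorem outdegree_le_two {N : ℕ} (T : LemniscateTree N) (j : Fin N) : outdegree T.1 j ≤ 2 :=
  T.2.2.2 j

theorem sum_outdegree {N : ℕ} (T : LemniscateTree (N + 1)) : ∑ j, outdegree T.1 j = N := by
  have hparent (i : Fin N) : (∑ j, if T.1 i.succ = some j then 1 else 0) = 1 := by
    obtain ⟨j, hj⟩ := Option.ne_none_iff_exists'.1 (mt (T.2.1 i.succ).1 (by simp))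
    simp [hj]
  have hroot : T.1 0 = none := (T.2.1 0).2 rfl
  simp only [outdegree, card_filter]
  rw [sum_comm, Fin.sum_univ_succ]
  simp [hroot, hparent]

theorem card_outdegree_one_add_two_mul {N : ℕ} (T : LemniscateTree (N + 1)) :
    #{j | outdegree T.1 j = 1} + 2 * outdegTwoCount T = N := by
  change _ + 2 * #{j | outdegree T.1 j = 2} = N
  conv_rhs => rw [← sum_outdegree T]
  rw [card_filter, card_filter, mul_sum, ← sum_add_distrib]
  refine sum_congr rfl fun j _ => ?_
  have := outdegree_le_two T j
  interval_cases outdegree T.1 j <;> rfl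

theorem card_outdegree_zero {N : ℕ} (T : LemniscateTree (N + 1)) :
    #{j | outdegree T.1 j = 0} = outdegTwoCount T + 1 := by
  have htotal : #{j | outdegree T.1 j = 0} + #{j | outdegree T.1 j = 1} + outdegTwoCount T =
      N + 1 := by
    change _ + _ + #{j | outdegree T.1 j = 2} = N + 1
    conv_rhs => rw [← Fintype.card_fin (N + 1), ← card_univ, card_eq_sum_ones]
    simp only [card_filter, ← sum_add_distrib]
    refine sum_congr rfl fun j _ => ?_
    have := outdegree_le_two T j
    interval_cases outdegree T.1 j <;> rfl
  have := card_outdegree_one_add_two_mul T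
  omega

theorem two_mul_outdegTwoCount_le {N : ℕ} (T : LemniscateTree (N + 1)) :
    2 * outdegTwoCount T ≤ N := by
  have := card_outdegree_one_add_two_mul T
  omega

theorem sum_outdegTwoCount_succ {M : Type*} [AddCommMonoid M] (N : ℕ) (g : ℕ → M) :
    ∑ T : LemniscateTree (N + 2), g (outdegTwoCount T) =
      ∑ T : LemniscateTree (N + 1), ((outdegTwoCount T + 1) • g (outdegTwoCount T) +
        (N - 2 * outdegTwoCount T) • g (outdegTwoCount T + 1)) := by
  rw [← (grow_bijective N).sum_comp, Fintype.sum_sigma]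
  refine sum_congr rfl fun T _ => ?_
  have hleaf : (outdegTwoCount T + 1) • g (outdegTwoCount T) =
      ∑ j with outdegree T.1 j = 0, g (outdegTwoCount T) := by
    rw [sum_const, card_outdegree_zero]
  have hunary : (N - 2 * outdegTwoCount T) • g (outdegTwoCount T + 1) =
      ∑ j with outdegree T.1 j = 1, g (outdegTwoCount T + 1) := by
    rw [sum_const, Nat.eq_sub_of_add_eq (card_outdegree_one_add_two_mul T)]
  simp only [outdegTwoCount_grow]
  rw [hleaf, hunary, sum_filter, sum_filter, ← sum_add_distrib,
    ← sum_subtype {j | outdegree T.1 j ≤ 1} (by simp)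
      fun j => g (outdegTwoCount T + if outdegree T.1 j = 1 then 1 else 0), sum_filter]
  refine sum_congr rfl fun j _ => ?_
  have := outdegree_le_two T j
  interval_cases outdegree T.1 j <;> simp

instance : Unique (LemniscateTree 1) where
  default := ⟨fun _ => none, by simp⟩
  uniq T := Subtype.ext (funext fun i => (T.2.1 i).2 (by omega))

theorem outdegTwoCount_one (T : LemniscateTree 1) : outdegTwoCount T = 0 := by
  have := two_mul_outdegTwoCount_le T
  omega

instance instNonempty : ∀ N, Nonempty (LemniscateTree (N + 1))
  | 0 => inferInstanceAs (Nonempty (LemniscateTree 1))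
  | N + 1 => by
    obtain ⟨T⟩ := instNonempty N
    obtain ⟨j, hj⟩ := card_pos.1 (Nat.lt_of_lt_of_eq (Nat.succ_pos _) (card_outdegree_zero T).symm)
    exact ⟨grow ⟨T, j, by simp_all⟩⟩

/-- The outdegree generating function of the lemniscate trees on `N + 1` vertices: the vertices
of outdegree one have weight `c`, those of outdegree two have weight `s`. -/
def outdegreeForm {R : Type*} [CommSemiring R] (N : ℕ) (c s : R) : R :=
  ∑ T : LemniscateTree (N + 1), c ^ (N - 2 * outdegTwoCount T) * s ^ outdegTwoCount T

section OutdegreeForm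

variable {R : Type*} [CommSemiring R]

@[simp]
theorem outdegreeForm_zero (c s : R) : outdegreeForm 0 c s = 1 := by
  simp [outdegreeForm, outdegTwoCount_one]

theorem outdegreeForm_succ (N : ℕ) (c s : R) :
    outdegreeForm (N + 1) c s = ∑ T : LemniscateTree (N + 1),
      ((outdegTwoCount T + 1) * c ^ (N - 2 * outdegTwoCount T + 1) * s ^ outdegTwoCount T +
        (N - 2 * outdegTwoCount T : ℕ) * c ^ (N - 2 * outdegTwoCount T - 1) *
          s ^ (outdegTwoCount T + 1)) := by
  rw [outdegreeForm, sum_outdegTwoCount_succ N fun k => c ^ (N + 1 - 2 * k) * s ^ k]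
  refine sum_congr rfl fun T _ => ?_
  have hle := two_mul_outdegTwoCount_le T
  rw [show N + 1 - 2 * outdegTwoCount T = N - 2 * outdegTwoCount T + 1 by omega,
    show N + 1 - 2 * (outdegTwoCount T + 1) = N - 2 * outdegTwoCount T - 1 by omega]
  simp only [nsmul_eq_mul, Nat.cast_add, Nat.cast_one, mul_assoc]

theorem map_outdegreeForm {S F : Type*} [CommSemiring S] [FunLike F R S] [RingHomClass F R S]
    (φ : F) (N : ℕ) (c s : R) :
    φ (outdegreeForm N c s) = outdegreeForm N (φ c) (φ s) := by
  simp [outdegreeForm]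

theorem outdegreeForm_mul_sq_mul (N : ℕ) (a c s : R) :
    outdegreeForm N (a * c) (a ^ 2 * s) = a ^ N * outdegreeForm N c s := by
  rw [outdegreeForm, outdegreeForm, mul_sum]
  refine sum_congr rfl fun T _ => ?_
  have hpow : a ^ N = a ^ (N - 2 * outdegTwoCount T) * (a ^ 2) ^ outdegTwoCount T := by
    rw [← pow_mul, ← pow_add, Nat.sub_add_cancel (two_mul_outdegTwoCount_le T)]
  rw [hpow, mul_pow, mul_pow]
  ring

theorem outdegreeForm_one (N : ℕ) (x : R) :
    outdegreeForm N 1 x = ∑ T : LemniscateTree (N + 1), x ^ outdegTwoCount T := by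
  simp [outdegreeForm]

theorem outdegreeForm_one_one (N : ℕ) :
    outdegreeForm N (1 : R) 1 = Fintype.card (LemniscateTree (N + 1)) := by
  simp [outdegreeForm]

theorem outdegreeForm_pos [PartialOrder R] [IsStrictOrderedRing R] (N : ℕ) {c s : R} (hc : 0 < c)
    (hs : 0 < s) : 0 < outdegreeForm N c s :=
  sum_pos (fun _ _ => by positivity) univ_nonempty

theorem eval_outdegreeForm (N : ℕ) (c s : R[X]) (x : R) :
    (outdegreeForm N c s).eval x = outdegreeForm N (c.eval x) (s.eval x) :=
  map_outdegreeForm (evalRingHom x) N c s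

end OutdegreeForm

theorem hasDerivAt_mul_outdegreeForm {𝕜 : Type*} [NontriviallyNormedField 𝕜] {c s : 𝕜 → 𝕜}
    {e y : 𝕜} (hc : HasDerivAt c e y) (hs : HasDerivAt s (c y * e) y) (N : ℕ) :
    HasDerivAt (fun y => s y * outdegreeForm N (c y) (s y))
      (e * outdegreeForm (N + 1) (c y) (s y)) y := by
  have hterm (T : LemniscateTree (N + 1)) :=
    (hc.fun_pow (N - 2 * outdegTwoCount T)).fun_mul (hs.fun_pow (outdegTwoCount T + 1))
  refine ((HasDerivAt.fun_sum fun T (_ : T ∈ univ) => hterm T).congr_deriv ?_).congr_of_eventuallyEq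
    (.of_forall fun y => ?_)
  · rw [outdegreeForm_succ, mul_sum]
    refine sum_congr rfl fun T _ => ?_
    push_cast [Nat.add_sub_cancel]
    ring
  · simp only [outdegreeForm, mul_sum]
    exact sum_congr rfl fun T _ => by ring

theorem derivative_mul_outdegreeForm {s : ℝ[X]} (hs : derivative s = X) (N : ℕ) :
    derivative (s * outdegreeForm N X s) = outdegreeForm (N + 1) X s := by
  refine Polynomial.funext fun x => ((s * outdegreeForm N X s).hasDerivAt x).unique ?_
  have hsx : HasDerivAt (fun x => s.eval x) (x * 1) x := by
    simpa [hs] using s.hasDerivAt x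
  simpa [eval_outdegreeForm] using hasDerivAt_mul_outdegreeForm (hasDerivAt_id' x) hsx N

theorem splits_outdegreeForm_X {s : ℝ[X]} (hs : s.Splits) (hs' : derivative s = X) (N : ℕ) :
    (outdegreeForm N X s).Splits := by
  induction N with
  | zero => simp
  | succ N ih =>
    rw [← derivative_mul_outdegreeForm hs']
    exact splits_derivative_of_splits (hs.mul ih)

-- With `s = (X ^ 2 - 1) / 2` and `v ^ 2 = (1 - 2 * u)⁻¹`, homogeneity turns a complex root `u` of
-- `outdegreeForm N 1 X` into a root `v` of the real-rooted polynomial `outdegreeForm N X s`.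
theorem splits_outdegreeForm_one_X (N : ℕ) : (outdegreeForm N (1 : ℝ[X]) X).Splits := by
  set s : ℝ[X] := C 2⁻¹ * ((X - C 1) * (X - C (-1))) with hs
  have hsplits : (outdegreeForm N X s).Splits := by
    refine splits_outdegreeForm_X (((Splits.X_sub_C 1).mul (Splits.X_sub_C (-1))).C_mul _) ?_ N
    refine Polynomial.funext fun x => ?_
    simp only [derivative_mul, derivative_C, derivative_X_sub_C, eval_mul, eval_add, eval_C,
      eval_zero, eval_one, eval_sub, eval_X]
    ring
  have hne : outdegreeForm N X s ≠ 0 := by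
    intro h
    refine (outdegreeForm_pos N (c := (2 : ℝ)) (s := s.eval 2) two_pos ?_).ne' ?_
    · norm_num [hs]
    · simpa [eval_outdegreeForm] using congrArg (eval 2) h
  refine Splits.of_splits_map (algebraMap ℝ ℂ) (IsAlgClosed.splits _) fun u hu => ?_
  have hroot : outdegreeForm N 1 u = 0 := by
    simpa [map_outdegreeForm] using (mem_aroots'.1 hu).2
  obtain rfl | hu' := eq_or_ne u 2⁻¹
  · exact ⟨2⁻¹, by simp⟩
  have hu'' : 1 - 2 * u ≠ 0 := fun h => hu' (by linear_combination (-1 / 2) * h)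
  obtain ⟨v, hv⟩ := IsAlgClosed.exists_pow_nat_eq (1 - 2 * u)⁻¹ (n := 2) two_pos
  have hsv : aeval v s = v ^ 2 * u := by
    have : v ^ 2 * (1 - 2 * u) = 1 := by rw [hv, inv_mul_cancel₀ hu'']
    simp only [hs, map_mul, map_sub, aeval_C, aeval_X, map_inv₀, map_ofNat, map_one, map_neg]
    linear_combination (1 / 2) * this
  have hv_root : (map (algebraMap ℝ ℂ) (outdegreeForm N X s)).IsRoot v := by
    rw [IsRoot, eval_map_algebraMap, map_outdegreeForm, aeval_X, hsv]
    simpa [hroot] using outdegreeForm_mul_sq_mul N v 1 u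
  obtain ⟨a, rfl⟩ := hsplits.mem_range_of_isRoot hne hv_root
  refine ⟨(1 - (a ^ 2)⁻¹) / 2, ?_⟩
  have hv' : ((algebraMap ℝ ℂ a) ^ 2)⁻¹ = 1 - 2 * u := by rw [hv, inv_inv]
  push_cast
  rw [hv']
  ring

section Variance

theorem card_add_two (N : ℕ) : (Fintype.card (LemniscateTree (N + 2)) : ℝ) =
    ∑ T : LemniscateTree (N + 1), (N + 1 - outdegTwoCount T : ℝ) := by
  have h := sum_outdegTwoCount_succ N fun _ => (1 : ℝ)
  rw [Fintype.card_eq_sum_ones, Nat.cast_sum]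
  simp only [Nat.cast_one, h]
  refine sum_congr rfl fun T _ => ?_
  simp only [nsmul_eq_mul]
  push_cast [two_mul_outdegTwoCount_le T]
  ring

theorem card_add_three (N : ℕ) : (Fintype.card (LemniscateTree (N + 3)) : ℝ) =
    ∑ T : LemniscateTree (N + 1),
      ((N + 1 - outdegTwoCount T : ℝ) ^ 2 - (N + 1 - outdegTwoCount T) + (N + 2)) := by
  rw [card_add_two, sum_outdegTwoCount_succ N fun k => ((N + 1 : ℕ) + 1 - k : ℝ)]
  refine sum_congr rfl fun T _ => ?_
  simp only [nsmul_eq_mul]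
  push_cast [two_mul_outdegTwoCount_le T]
  ring

/-- The factor by which the number of lemniscate trees grows from `N + 1` to `N + 2` vertices. -/
noncomputable def cardRatio (N : ℕ) : ℝ :=
  Fintype.card (LemniscateTree (N + 2)) / Fintype.card (LemniscateTree (N + 1))

theorem card_pos (N : ℕ) : (0 : ℝ) < Fintype.card (LemniscateTree (N + 1)) :=
  Nat.cast_pos.2 Fintype.card_pos

theorem lemMean_add_one (N : ℕ) : lemMean (N + 1) = N + 1 - cardRatio N := by
  have hc := (card_pos N).ne'
  rw [lemMean, cardRatio, card_add_two, sum_sub_distrib, sum_const, card_univ, nsmul_eq_mul]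
  field_simp
  ring

theorem lemVar_add_one (N : ℕ) :
    lemVar (N + 1) = cardRatio N * (cardRatio (N + 1) - cardRatio N + 1) - (N + 2) := by
  have hc := (card_pos N).ne'
  have hc' := (card_pos (N + 1)).ne'
  have hmean := card_add_two N
  have hsq := card_add_three N
  rw [sum_add_distrib, sum_sub_distrib, ← hmean, sum_const, card_univ, nsmul_eq_mul] at hsq
  have hexpand : ∑ T : LemniscateTree (N + 1), (outdegTwoCount T - lemMean (N + 1) : ℝ) ^ 2 =
      ∑ T : LemniscateTree (N + 1), (N + 1 - outdegTwoCount T : ℝ) ^ 2 -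
        2 * cardRatio N * Fintype.card (LemniscateTree (N + 2)) +
        Fintype.card (LemniscateTree (N + 1)) * cardRatio N ^ 2 := by
    rw [hmean, mul_sum, ← sum_sub_distrib, ← nsmul_eq_mul, ← card_univ, ← sum_const,
      ← sum_add_distrib]
    refine sum_congr rfl fun T _ => ?_
    rw [lemMean_add_one]
    ring
  rw [lemVar, hexpand, eq_add_of_sub_eq (eq_sub_of_add_eq hsq.symm), cardRatio, cardRatio]
  field_simp
  ring

theorem card_mul_le (N : ℕ) :
    (N + 2) / 2 * (Fintype.card (LemniscateTree (N + 1)) : ℝ) ≤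
      Fintype.card (LemniscateTree (N + 2)) := by
  rw [card_add_two, mul_comm, ← nsmul_eq_mul, ← card_univ, ← sum_const]
  refine sum_le_sum fun T _ => ?_
  have : (2 * outdegTwoCount T : ℝ) ≤ N := mod_cast two_mul_outdegTwoCount_le T
  linarith

theorem factorial_div_two_pow_le_card (N : ℕ) :
    ((N + 1).factorial : ℝ) / 2 ^ N ≤ Fintype.card (LemniscateTree (N + 1)) := by
  induction N with
  | zero => simp
  | succ N ih =>
    calc ((N + 2).factorial : ℝ) / 2 ^ (N + 1)
        = (N + 2) / 2 * ((N + 1).factorial / 2 ^ N) := by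
          rw [Nat.factorial_succ (N + 1), pow_succ]
          push_cast
          field_simp
          ring
      _ ≤ (N + 2) / 2 * Fintype.card (LemniscateTree (N + 1)) := by gcongr
      _ ≤ Fintype.card (LemniscateTree (N + 2)) := card_mul_le N

end Variance

section CardAsymptotics

open Filter Topology

/-- The function `sec y + tan y`, in a form whose derivative is a polynomial in the function. -/
noncomputable def secAddTan (y : ℂ) : ℂ := Complex.tan (Real.pi / 4 + y / 2)

/-- The `n`-th derivative of `secAddTan`, written in terms of lemniscate trees. -/
noncomputable def secAddTanDeriv : ℕ → ℂ → ℂ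
  | 0 => secAddTan
  | N + 1 => fun y => (1 + secAddTan y ^ 2) / 2 *
      outdegreeForm N (secAddTan y) ((1 + secAddTan y ^ 2) / 2)

theorem hasDerivAt_secAddTanDeriv {y : ℂ} (hy : Complex.cos (Real.pi / 4 + y / 2) ≠ 0) (n : ℕ) :
    HasDerivAt (secAddTanDeriv n) (secAddTanDeriv (n + 1) y) y := by
  have hc : HasDerivAt secAddTan ((1 + secAddTan y ^ 2) / 2) y := by
    have hlin : HasDerivAt (fun y : ℂ => Real.pi / 4 + y / 2) (1 / 2) y :=
      ((hasDerivAt_id' y).div_const 2).const_add _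
    refine HasDerivAt.congr_deriv (f := secAddTan)
      ((Complex.hasDerivAt_tan hy).comp y hlin) ?_
    rw [secAddTan, one_div, ← Complex.inv_one_add_tan_sq hy, inv_inv]
    ring
  have hs : HasDerivAt (fun y => (1 + secAddTan y ^ 2) / 2)
      (secAddTan y * ((1 + secAddTan y ^ 2) / 2)) y :=
    (((hc.fun_pow 2).const_add 1).div_const 2).congr_deriv (by push_cast; ring)
  cases n with
  | zero => simpa [secAddTanDeriv] using hc
  | succ N => exact hasDerivAt_mul_outdegreeForm hc hs N

theorem secAddTanDeriv_succ_zero (N : ℕ) :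
    secAddTanDeriv (N + 1) 0 = Fintype.card (LemniscateTree (N + 1)) := by
  have htan : secAddTan 0 = 1 := by
    rw [secAddTan, zero_div, add_zero]
    exact_mod_cast congrArg Complex.ofReal Real.tan_pi_div_four
  simp only [secAddTanDeriv, htan]
  norm_num [outdegreeForm_one_one]

theorem iteratedDeriv_mul_secAddTan (n : ℕ) :
    iteratedDeriv (n + 1) (fun y => (Real.pi / 2 - y) * secAddTan y) 0 =
      Real.pi / 2 * secAddTanDeriv (n + 1) 0 - (n + 1) * secAddTanDeriv n 0 := by
  set U : Set ℂ := {y | Complex.cos (Real.pi / 4 + y / 2) ≠ 0} with hU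
  have hopen : IsOpen U := isOpen_ne_fun (by fun_prop) continuous_const
  have h0 : (0 : ℂ) ∈ U := by
    have : Real.cos (Real.pi / 4) ≠ 0 := by
      rw [Real.cos_pi_div_four]
      positivity
    simpa [hU] using mod_cast this
  let F (n : ℕ) (y : ℂ) := (Real.pi / 2 - y) * secAddTanDeriv n y - n * secAddTanDeriv (n - 1) y
  have hF (n : ℕ) (y : ℂ) (hy : y ∈ U) : HasDerivAt (F n) (F (n + 1) y) y := by
    have hmul := ((hasDerivAt_id' y).const_sub (Real.pi / 2 : ℂ)).fun_mul
      (hasDerivAt_secAddTanDeriv hy n)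
    have hsub : HasDerivAt (fun y => n * secAddTanDeriv (n - 1) y) (n * secAddTanDeriv n y) y := by
      cases n with
      | zero => simpa using hasDerivAt_const y (0 : ℂ)
      | succ n => exact (hasDerivAt_secAddTanDeriv hy n).const_mul _
    refine (hmul.fun_sub hsub).congr_deriv ?_
    simp only [F]
    push_cast [Nat.add_sub_cancel]
    ring
  have := iteratedDeriv_eq_of_hasDerivAt hopen hF (n + 1) h0
  simpa [F, secAddTanDeriv] using this

/-- The analytic extension of `v * cot v` to the origin. -/
noncomputable def mulCot (v : ℂ) : ℂ := Complex.cos v / dslope Complex.sin 0 v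

theorem differentiableOn_mulCot : DifferentiableOn ℂ mulCot (Metric.ball 0 Real.pi) := by
  have hdslope : Differentiable ℂ (dslope Complex.sin 0) := by
    rw [← differentiableOn_univ, Complex.differentiableOn_dslope univ_mem]
    fun_prop
  refine Complex.differentiable_cos.differentiableOn.fun_div hdslope.differentiableOn fun v hv => ?_
  obtain rfl | hv0 := eq_or_ne v 0
  · simp
  rw [dslope_of_ne _ hv0, slope_def_field, Complex.sin_zero, sub_zero, sub_zero]
  refine div_ne_zero (fun hsin => ?_) hv0
  obtain ⟨k, rfl⟩ := Complex.sin_eq_zero_iff.1 hsin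
  have hk : (1 : ℝ) ≤ |(k : ℝ)| :=
    mod_cast Int.one_le_abs fun hk => hv0 (by rw [hk, Int.cast_zero, zero_mul])
  rw [mem_ball_zero_iff, norm_mul, Complex.norm_intCast, Complex.norm_real, Real.norm_eq_abs,
    abs_of_pos Real.pi_pos] at hv
  exact hv.not_ge (le_mul_of_one_le_left Real.pi_pos.le hk)

theorem mul_secAddTan_eq_mulCot {y : ℂ} (hy : y ≠ Real.pi / 2) :
    (Real.pi / 2 - y) * secAddTan y = 2 * mulCot (Real.pi / 4 - y / 2) := by
  have hv : (Real.pi / 4 - y / 2 : ℂ) ≠ 0 := fun h => hy (by linear_combination -2 * h)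
  rw [secAddTan, mulCot, dslope_of_ne _ hv, slope_def_field, Complex.sin_zero, sub_zero, sub_zero,
    show (Real.pi / 4 + y / 2 : ℂ) = Real.pi / 2 - (Real.pi / 4 - y / 2) by ring,
    Complex.tan_pi_div_two_sub, Complex.tan, inv_div, div_div_eq_mul_div]
  ring

-- The factor `π / 2 - y` cancels the pole of `secAddTan` at `π / 2`; the next one, `-3 * π / 2`,
-- is at distance more than `4` from the origin.
theorem exists_norm_iteratedDeriv_mul_secAddTan_le : ∃ C, ∀ n,
    ‖iteratedDeriv n (fun y => (Real.pi / 2 - y) * secAddTan y) 0‖ ≤ n.factorial * C / 4 ^ n := by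
  let f (y : ℂ) : ℂ := 2 * mulCot (Real.pi / 4 - y / 2)
  have heq : (fun y => (Real.pi / 2 - y) * secAddTan y) =ᶠ[𝓝 0] f := by
    have h0 : (0 : ℂ) ≠ Real.pi / 2 := (by simp [Real.pi_ne_zero] : (Real.pi / 2 : ℂ) ≠ 0).symm
    filter_upwards [isOpen_ne.mem_nhds h0] with y hy using mul_secAddTan_eq_mulCot hy
  have hdiff : DifferentiableOn ℂ f (Metric.closedBall 0 4) := by
    refine (differentiableOn_mulCot.comp (by fun_prop) fun y hy => ?_).const_mul 2
    rw [mem_closedBall_zero_iff] at hy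
    have hv : ‖(Real.pi / 4 - y / 2 : ℂ)‖ ≤ Real.pi / 4 + ‖y‖ / 2 := by
      simpa [abs_of_pos Real.pi_pos] using norm_sub_le (Real.pi / 4 : ℂ) (y / 2)
    rw [mem_ball_zero_iff]
    linarith [Real.pi_gt_three]
  obtain ⟨C, hC⟩ := (isCompact_sphere (0 : ℂ) 4).exists_bound_of_continuousOn
    (hdiff.continuousOn.mono Metric.sphere_subset_closedBall)
  refine ⟨C, fun n => ?_⟩
  rw [heq.iteratedDeriv_eq]
  exact Complex.norm_iteratedDeriv_le_of_forall_mem_sphere_norm_le n four_pos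
    (hdiff.diffContOnCl_ball subset_rfl) hC

theorem exists_abs_card_sub_card_le : ∃ C, 0 ≤ C ∧ ∀ N : ℕ,
    |Real.pi / 2 * Fintype.card (LemniscateTree (N + 2)) -
      (N + 2) * Fintype.card (LemniscateTree (N + 1))| ≤ (N + 2).factorial * C / 4 ^ (N + 2) := by
  obtain ⟨C, hC⟩ := exists_norm_iteratedDeriv_mul_secAddTan_le
  refine ⟨C, by simpa using (norm_nonneg _).trans (hC 0), fun N => le_of_eq_of_le ?_ (hC (N + 2))⟩
  rw [iteratedDeriv_mul_secAddTan, secAddTanDeriv_succ_zero, secAddTanDeriv_succ_zero,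
    ← Real.norm_eq_abs, ← Complex.norm_real]
  congr 1
  push_cast
  ring

theorem exists_abs_cardRatio_sub_le : ∃ C, ∀ N : ℕ,
    |cardRatio N - 2 / Real.pi * (N + 2)| ≤ C * ((N + 2) * (1 / 2) ^ N) := by
  obtain ⟨C, hC0, hC⟩ := exists_abs_card_sub_card_le
  refine ⟨C / (8 * Real.pi), fun N => ?_⟩
  have hc := card_pos N
  have hratio : cardRatio N - 2 / Real.pi * (N + 2) =
      2 / Real.pi * (Real.pi / 2 * Fintype.card (LemniscateTree (N + 2)) -
        (N + 2) * Fintype.card (LemniscateTree (N + 1))) /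
          Fintype.card (LemniscateTree (N + 1)) := by
    rw [cardRatio]
    field_simp
  have hpow : (4 : ℝ) ^ (N + 2) = 16 * (2 ^ N * 2 ^ N) := by
    rw [pow_add, ← mul_pow]
    norm_num [mul_comm]
  rw [hratio, abs_div, abs_mul, abs_of_pos hc, abs_of_pos (div_pos two_pos Real.pi_pos),
    div_le_iff₀ hc]
  calc 2 / Real.pi * |_| ≤ 2 / Real.pi * ((N + 2).factorial * C / 4 ^ (N + 2)) := by
        gcongr
        exact hC N
    _ = C / (8 * Real.pi) * ((N + 2) * (1 / 2) ^ N) * ((N + 1).factorial / 2 ^ N) := by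
        rw [Nat.factorial_succ (N + 1), hpow, one_div, inv_pow]
        push_cast
        field_simp
        ring
    _ ≤ _ := by
        gcongr
        exact factorial_div_two_pow_le_card N

theorem tendsto_cardRatio_sub : Tendsto (fun N : ℕ => cardRatio N - 2 / Real.pi * (N + 2))
    atTop (𝓝 0) := by
  obtain ⟨C, hC⟩ := exists_abs_cardRatio_sub_le
  refine squeeze_zero_norm hC ?_
  have hlin := tendsto_self_mul_const_pow_of_lt_one (r := (1 / 2 : ℝ)) (by norm_num) (by norm_num)
  have hgeom := tendsto_pow_atTop_nhds_zero_of_lt_one (r := (1 / 2 : ℝ)) (by norm_num)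
    (by norm_num)
  simpa [add_mul] using (hlin.add (hgeom.const_mul 2)).const_mul C

theorem tendsto_lemVar_div : Tendsto (fun N : ℕ => lemVar (N + 1) / (N + 2)) atTop
    (𝓝 (2 / Real.pi * (2 / Real.pi + 1) - 1)) := by
  have hdiff : Tendsto (fun N => cardRatio (N + 1) - cardRatio N) atTop (𝓝 (2 / Real.pi)) := by
    have := ((tendsto_cardRatio_sub.comp (tendsto_add_atTop_nat 1)).sub
      tendsto_cardRatio_sub).add_const (2 / Real.pi)
    rw [sub_zero, zero_add] at this
    refine this.congr fun N => ?_
    simp only [Function.comp]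
    push_cast
    ring
  have hinv : Tendsto (fun N : ℕ => ((N : ℝ) + 2)⁻¹) atTop (𝓝 0) :=
    tendsto_inv_atTop_zero.comp (tendsto_atTop_add_const_right _ _ tendsto_natCast_atTop_atTop)
  have hdiv : Tendsto (fun N : ℕ => cardRatio N / (N + 2)) atTop (𝓝 (2 / Real.pi)) := by
    have := (tendsto_cardRatio_sub.mul hinv).add_const (2 / Real.pi)
    rw [mul_zero, zero_add] at this
    refine this.congr fun N => ?_
    field_simp
    ring
  refine ((hdiv.mul (hdiff.add_const 1)).sub_const 1).congr fun N => ?_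
  rw [lemVar_add_one]
  field_simp

theorem exists_mul_le_lemVar : ∃ c : ℝ, 0 < c ∧
    ∀ᶠ N : ℕ in atTop, c * (N + 2) ≤ lemVar (N + 1) := by
  have hlim : 0 < 2 / Real.pi * (2 / Real.pi + 1) - 1 := by
    have : 5 / 8 < 2 / Real.pi := by
      rw [lt_div_iff₀ Real.pi_pos]
      linarith [Real.pi_lt_d2]
    nlinarith
  obtain ⟨c, hc0, hc⟩ := exists_between hlim
  refine ⟨c, hc0, ?_⟩
  filter_upwards [tendsto_lemVar_div.eventually (lt_mem_nhds hc)] with N hN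
  exact ((lt_div_iff₀ (by positivity)).1 hN).le

end CardAsymptotics

section NormalApproximation

open Filter Topology

theorem sum_outdegTwoCount_eq_pgfExpectation (N : ℕ) (h : ℕ → ℝ) :
    ∑ T : LemniscateTree (N + 1), h (outdegTwoCount T) =
      pgfExpectation (outdegreeForm N 1 X) h := by
  simp only [outdegreeForm_one, map_sum, LinearMap.sum_apply, pgfExpectation_X_pow]

theorem exists_sum_outdegTwoCount_eq_poissonBinomial (N : ℕ) :
    ∃ (ι : Type) (p : ι → ℝ) (s : Finset ι), (∀ i, p i ∈ Set.Icc 0 1) ∧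
      ∀ h : ℕ → ℝ, (∑ T : LemniscateTree (N + 1), h (outdegTwoCount T)) /
        Fintype.card (LemniscateTree (N + 1)) = pgfExpectation (poissonBinomial p s) h := by
  have hpos (x : ℝ) (hx : 0 < x) : 0 < (outdegreeForm N 1 X).eval x := by
    simpa [eval_outdegreeForm] using outdegreeForm_pos N one_pos hx
  have hcard : (outdegreeForm N 1 X).eval 1 = (Fintype.card (LemniscateTree (N + 1)) : ℝ) := by
    simp [eval_outdegreeForm, outdegreeForm_one_one]
  refine ⟨_, _, univ, inv_one_sub_root_mem_Icc hpos, fun h => ?_⟩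
  conv_lhs =>
    rw [sum_outdegTwoCount_eq_pgfExpectation,
      eq_C_mul_poissonBinomial (splits_outdegreeForm_one_X N) hpos, pgfExpectation_C_mul, hcard,
      mul_div_cancel_left₀ _ (card_pos N).ne']

theorem abs_stdCDF_sub_stdGaussianCDF_le {N : ℕ} (hN : 0 < lemVar (N + 1)) (x : ℝ) :
    |stdCDF (N + 1) x - stdGaussianCDF x| ≤ (3 + millsRatio 0) / √(lemVar (N + 1)) := by
  classical
  obtain ⟨ι, p, s, hp, hsum⟩ := exists_sum_outdegTwoCount_eq_poissonBinomial N
  have hmean : lemMean (N + 1) = ∑ i ∈ s, p i := by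
    rw [lemMean, hsum fun k => k, pgfExpectation_poissonBinomial_nat]
  have hvar : lemVar (N + 1) = ∑ i ∈ s, p i * (1 - p i) := by
    rw [lemVar, hsum fun k => (k - lemMean (N + 1)) ^ 2, hmean,
      pgfExpectation_poissonBinomial_sub_mean_sq]
  have hcdf : stdCDF (N + 1) x =
      pgfExpectation (poissonBinomial p s) fun k => if standardize p s k ≤ x then 1 else 0 := by
    rw [← hsum, stdCDF, ← Finset.natCast_card_filter, hmean, hvar]
    congr!
  rw [hcdf, hvar]
  exact abs_pgfExpectation_poissonBinomial_sub_stdGaussianCDF_le hp (hvar ▸ hN) x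

theorem abs_stdCDF_sub_stdGaussianCDF_le_one (N : ℕ) (x : ℝ) :
    |stdCDF N x - stdGaussianCDF x| ≤ 1 := by
  have h0 : 0 ≤ stdCDF N x := by
    rw [stdCDF]
    positivity
  have h1 : stdCDF N x ≤ 1 :=
    div_le_one_of_le₀ (mod_cast Finset.card_le_univ _) (Nat.cast_nonneg _)
  rw [abs_le]
  constructor <;> linarith [stdGaussianCDF_nonneg x, stdGaussianCDF_le_one x]

theorem exists_abs_stdCDF_sub_stdGaussianCDF_le :
    ∃ C : ℝ, 0 < C ∧ ∀ N : ℕ, 1 ≤ N → ∀ x : ℝ,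
      |stdCDF N x - stdGaussianCDF x| ≤ C * (N : ℝ) ^ (-(1 : ℝ) / 2) := by
  obtain ⟨c, hc, hvar⟩ := exists_mul_le_lemVar
  obtain ⟨M, hM⟩ := eventually_atTop.1 hvar
  have hmills := millsRatio_nonneg 0
  refine ⟨max √(M + 1) ((3 + millsRatio 0) / √c), by positivity, fun N hN x => ?_⟩
  obtain ⟨n, rfl⟩ := Nat.exists_eq_add_of_le' hN
  have hn : (0 : ℝ) < (n + 1 : ℕ) := by positivity
  rw [neg_div, Real.rpow_neg hn.le, ← Real.sqrt_eq_rpow, ← div_eq_mul_inv]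
  rcases lt_or_ge n M with hnM | hMn
  · refine (abs_stdCDF_sub_stdGaussianCDF_le_one _ x).trans ?_
    rw [one_le_div (by positivity)]
    refine le_max_of_le_left (Real.sqrt_le_sqrt ?_)
    exact_mod_cast Nat.succ_le_succ hnM.le
  · have hle : c * (n + 1 : ℕ) ≤ lemVar (n + 1) := by
      refine le_trans ?_ (hM n hMn)
      push_cast
      nlinarith
    calc _ ≤ (3 + millsRatio 0) / √(lemVar (n + 1)) :=
          abs_stdCDF_sub_stdGaussianCDF_le ((mul_pos hc hn).trans_le hle) x
      _ ≤ (3 + millsRatio 0) / √(c * (n + 1 : ℕ)) := by gcongr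
      _ = (3 + millsRatio 0) / √c / √(n + 1 : ℕ) := by rw [Real.sqrt_mul hc.le, div_div]
      _ ≤ _ := by
          gcongr
          exact le_max_right _ _

end NormalApproximation

end LemniscateTree

/-- the standardized number of outdegree-two vertices converges in
distribution to a standard Gaussian, with Kolmogorov-distance speed `O(N^{-1/2})`. -/
theorem outdegTwo_gaussian_limit :
    (∀ x : ℝ, Filter.Tendsto (fun N : ℕ => stdCDF N x) Filter.atTop
        (nhds (stdGaussianCDF x))) ∧
    ∃ C : ℝ, 0 < C ∧ ∀ N : ℕ, 1 ≤ N → ∀ x : ℝ,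
      |stdCDF N x - stdGaussianCDF x| ≤ C * (N : ℝ) ^ (-(1 : ℝ) / 2) := by
  obtain ⟨C, hC, hspeed⟩ := LemniscateTree.exists_abs_stdCDF_sub_stdGaussianCDF_le
  refine ⟨fun x => ?_, C, hC, hspeed⟩
  have hbound :
      Filter.Tendsto (fun N : ℕ => C * (N : ℝ) ^ (-(1 : ℝ) / 2)) Filter.atTop (nhds 0) := by
    simpa [neg_div] using
      ((tendsto_rpow_neg_atTop one_half_pos).comp tendsto_natCast_atTop_atTop).const_mul C
  refine tendsto_iff_norm_sub_tendsto_zero.2 (squeeze_zero' (.of_forall fun N => norm_nonneg _)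
    ?_ hbound)
  filter_upwards [Filter.eventually_ge_atTop 1] with N hN using hspeed N hN x
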